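/- arXiv:2006.04936 — 4 statements merged into one kernel-verified Lean document; each statement's English description precedes it below -/
import Mathlib

section
/- Let p ≥ 3 be a prime, let a and s be positive integers, and set c = 1/(s(p−1)). Let e : ℤ → ℤ be an a-periodic function with 0 ≤ e_i ≤ p−1 for all i, set ω = e_0 + e_1 + ⋯ + e_{a−1}, and for each integer j set q(j) = −∑_{i=0}^{a−1} (i+1)·e_{i+j}. Let K be a field equipped with a valuation v : K → ℝ ∪ {∞} extending a nonarchimedean absolute value (v(x+y) ≥ min(v(x),v(y)), v(xy) = v(x)+v(y), v(0) = ∞), and let α = ∑_{k≥0} α_k u^k be a formal power series over K with v(α_k) ≥ k·c for all k ≥ 0 (we set α_k = 0 for k < 0). Then for every integer j, every integer n ≥ 1 and every integer m ≥ 1, one has v(α_{pm − n − e_j}) + (q(j)/a)·c + p·n·c ≥ (q(j+1)/a)·c + p·m·c + n·(p−1)·c − (ω/a)·c. -/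
open scoped BigOperators

/-! Summation by parts over one period gives `q j + ω = q (j + 1) + a * e j`. With
`k = p * m - n - e j`, this says that `k * c` is exactly the gap between the explicit terms on the
two sides: the shift by `e j` coming from the twist is absorbed by passing from `q j` to
`q (j + 1)`. So the estimate is the bound `k * c` on the valuation of the `k`-th coefficient. -/

theorem sum_range_shift_eq_of_apply_eq {M : Type*} [AddCommMonoid M] {f : ℕ → M} {n : ℕ}
    (h : f n = f 0) : ∑ i ∈ Finset.range n, f (i + 1) = ∑ i ∈ Finset.range n, f i := by
  cases n with
  | zero => rfl
  | succ n => rw [Finset.sum_range_succ, Finset.sum_range_succ', h]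

theorem sum_range_add_eq_of_periodic {M : Type*} [AddCommMonoid M] {e : ℤ → M} {a : ℕ}
    (he : Function.Periodic e a) (j : ℤ) :
    ∑ i ∈ Finset.range a, e (i + j) = ∑ i ∈ Finset.range a, e i := by
  have h_shift : Function.Periodic (fun j : ℤ ↦ ∑ i ∈ Finset.range a, e (i + j)) 1 := by
    intro j
    have h_wrap : e ((a : ℕ) + j) = e ((0 : ℕ) + j) := by
      rw [add_comm, he, Nat.cast_zero, zero_add]
    simpa only [Nat.cast_add, Nat.cast_one, add_assoc, add_comm (1 : ℤ)] using
      sum_range_shift_eq_of_apply_eq (f := fun i : ℕ ↦ e (i + j)) h_wrap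
  simpa only [mul_one, Int.cast_id, add_zero] using h_shift.int_mul_eq j

theorem sum_range_cast_succ_mul_sub {R : Type*} [Ring R] (f : ℕ → R) (n : ℕ) :
    ∑ i ∈ Finset.range n, ((i : R) + 1) * (f (i + 1) - f i) =
      n * f n - ∑ i ∈ Finset.range n, f i := by
  induction n with
  | zero => simp
  | succ n ih =>
    rw [Finset.sum_range_succ, Finset.sum_range_succ, ih, Nat.cast_succ]
    noncomm_ring

/-- The exponent `q(e, j)` of `π_{as}` by which the `j`-th coordinate is scaled, for the
twist exponents `e` of period `a`. The sequence `e` is indexed by `ℤ`, so that no reduction of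
indices modulo `a` is needed. -/
def scalingExponent {R : Type*} [Ring R] (a : ℕ) (e : ℤ → R) (j : ℤ) : R :=
  -∑ i ∈ Finset.range a, ((i : R) + 1) * e (i + j)

theorem scalingExponent_sub_scalingExponent_succ {R : Type*} [Ring R] {a : ℕ} {e : ℤ → R}
    (he : Function.Periodic e a) (j : ℤ) :
    scalingExponent a e j - scalingExponent a e (j + 1) =
      a * e j - ∑ i ∈ Finset.range a, e i := by
  calc scalingExponent a e j - scalingExponent a e (j + 1)
      = ∑ i ∈ Finset.range a, ((i : R) + 1) * (e ((i + 1 : ℕ) + j) - e (i + j)) := by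
        simp only [scalingExponent, mul_sub, Finset.sum_sub_distrib, Nat.cast_add, Nat.cast_one,
          add_assoc, add_comm (1 : ℤ)]
        abel
    _ = a * e (a + j) - ∑ i ∈ Finset.range a, e (i + j) :=
        sum_range_cast_succ_mul_sub (fun i : ℕ ↦ e (i + j)) a
    _ = a * e j - ∑ i ∈ Finset.range a, e i := by
        rw [sum_range_add_eq_of_periodic he, add_comm (a : ℤ), he]

theorem le_apply_of_forall_nonneg_le {Γ K : Type*} [LE Γ] [OrderTop Γ] [Zero K] {v : K → Γ}
    (hv_zero : v 0 = ⊤) {b : ℤ → Γ} {α : ℤ → K} (hα_neg : ∀ k < 0, α k = 0)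
    (hα : ∀ k, 0 ≤ k → b k ≤ v (α k)) (k : ℤ) : b k ≤ v (α k) := by
  rcases lt_or_ge k 0 with hk | hk
  · rw [hα_neg k hk, hv_zero]
    exact le_top
  · exact hα k hk

theorem stmt0_general {R K : Type*} [Field R] [LinearOrder R] [IsStrictOrderedRing R]
    (p : ℕ) {a : ℕ} (ha : 0 < a) {c : R} {e : ℤ → ℤ} (he : Function.Periodic e a)
    {v : K → WithTop R} {α : ℤ → K} (hα : ∀ k : ℤ, ((k * c : R) : WithTop R) ≤ v (α k))
    (j n m : ℤ) :
    (((scalingExponent a e (j + 1) : ℤ) / a * c + p * m * c + n * (p - 1) * c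
        - (∑ i ∈ Finset.range a, e i : ℤ) / a * c : R) : WithTop R) ≤
      v (α (p * m - n - e j)) +
        (((scalingExponent a e j : ℤ) / a * c + p * n * c : R) : WithTop R) := by
  have h_diff : ((scalingExponent a e j : ℤ) : R) - (scalingExponent a e (j + 1) : ℤ) =
      a * e j - (∑ i ∈ Finset.range a, e i : ℤ) := by
    exact_mod_cast congrArg (Int.cast : ℤ → R) (scalingExponent_sub_scalingExponent_succ he j)
  have h_exponent : ((scalingExponent a e (j + 1) : ℤ) / a * c + p * m * c + n * (p - 1) * c
        - (∑ i ∈ Finset.range a, e i : ℤ) / a * c : R) =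
      (p * m - n - e j : ℤ) * c + ((scalingExponent a e j : ℤ) / a * c + p * n * c) := by
    have ha₀ : (a : R) ≠ 0 := Nat.cast_ne_zero.mpr ha.ne'
    rw [sub_eq_iff_eq_add.mp h_diff]
    push_cast
    field_simp
    ring
  rw [h_exponent, WithTop.coe_add]
  gcongr
  exact hα _

/-- Coefficientwise form of the second estimate of Proposition 4.1 ("type 1" local
`U_p` estimate). -/
theorem stmt0
    (p a s : ℕ) (hp : p.Prime) (hp3 : 3 ≤ p) (ha : 0 < a) (hs : 0 < s)
    (c : ℝ) (hc : c = 1 / (s * (p - 1)))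
    (e : ℤ → ℤ) (he : ∀ i : ℤ, e (i + a) = e i)
    (he0 : ∀ i : ℤ, 0 ≤ e i) (he1 : ∀ i : ℤ, e i ≤ (p : ℤ) - 1)
    (ω : ℤ) (hω : ω = ∑ i ∈ Finset.range a, e i)
    (q : ℤ → ℤ) (hq : ∀ j : ℤ, q j = -∑ i ∈ Finset.range a, ((i : ℤ) + 1) * e (i + j))
    (K : Type*) [Field K]
    (v : K → WithTop ℝ)
    (hv_add : ∀ x y : K, min (v x) (v y) ≤ v (x + y))
    (hv_mul : ∀ x y : K, v (x * y) = v x + v y)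
    (hv_zero : v 0 = ⊤)
    (α : ℤ → K) (hαneg : ∀ k : ℤ, k < 0 → α k = 0)
    (hα : ∀ k : ℤ, 0 ≤ k → (((k : ℝ) * c : ℝ) : WithTop ℝ) ≤ v (α k)) :
    ∀ j n m : ℤ, 1 ≤ n → 1 ≤ m →
      (((q (j + 1) : ℝ) / (a : ℝ) * c + (p : ℝ) * (m : ℝ) * c
          + (n : ℝ) * ((p : ℝ) - 1) * c - (ω : ℝ) / (a : ℝ) * c : ℝ) : WithTop ℝ)
        ≤ v (α ((p : ℤ) * m - n - e j))
            + (((q j : ℝ) / (a : ℝ) * c + (p : ℝ) * (n : ℝ) * c : ℝ) : WithTop ℝ) := by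
  obtain ⟨rfl, rfl⟩ : q = scalingExponent a e ∧ ω = ∑ i ∈ Finset.range a, e i := ⟨funext hq, hω⟩
  exact fun j n m _ _ ↦
    stmt0_general p ha he (le_apply_of_forall_nonneg_le hv_zero hαneg hα) j n m
end

section
/- Let R be a commutative ring, let p and a be positive integers, and let e_0, …, e_{a−1} be nonnegative integers, with indices read modulo a. In the ring R[t, t^{−1}] of Laurent polynomials, for each k ≥ 0 let φ_k : R[t,t^{−1}] → R[t,t^{−1}] be the R-algebra endomorphism sending t to t^{p^k}. Let C₀ be the a×a matrix over R[t,t^{−1}] whose only nonzero entries are (C₀)_{j+1 mod a, j} = t^{−e_j} for j = 0, …, a−1. Then the matrix product φ_{a−1}(C₀)·φ_{a−2}(C₀)·⋯·φ_1(C₀)·C₀ (with φ_k applied entrywise) equals the diagonal matrix diag(t^{−ε_0}, …, t^{−ε_{a−1}}), where ε_j = ∑_{i=0}^{a−1} e_{(i+j) mod a}·p^i. -/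
open LaurentPolynomial

/-!
The matrix `C₀` is a weighted cyclic shift: it sends the `c`-th basis vector to `t^{−e_c}` times the
`(c+1)`-st one. Weighted shifts compose by adding the displacements and multiplying the weights met
along the way, and `φ_k` only changes the weights, so after `a` shifts every basis vector is back in
place, having collected the weight `∏_k φ_k(t^{−e_{j+k}}) = t^{−∑_k e_{j+k} p^k}`.
-/

section WeightedShift

variable {G S S' : Type*} [DecidableEq G]

/-- The weighted shift by `g` on an additive index type: the matrix sending the basis vector at `c`
to `w c` times the basis vector at `c + g`. The weight is indexed by the column, that is, by the
source of the shift. -/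
def weightedShift [Add G] [Zero S] (g : G) (w : G → S) : Matrix G G S :=
  Matrix.of fun r c => if r = c + g then w c else 0

theorem weightedShift_zero [AddZeroClass G] [Zero S] (w : G → S) :
    weightedShift 0 w = Matrix.diagonal w := by
  ext r c
  by_cases h : r = c <;> simp [weightedShift, h]

theorem weightedShift_map [Add G] [Zero S] [Zero S'] (g : G) (w : G → S) (f : S → S')
    (hf : f 0 = 0) : (weightedShift g w).map f = weightedShift g (f ∘ w) := by
  ext r c
  simp only [weightedShift, Matrix.map_apply, Matrix.of_apply, apply_ite f, hf,
    Function.comp_apply]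

theorem weightedShift_mul_weightedShift [Fintype G] [AddSemigroup G] [NonUnitalNonAssocSemiring S]
    (g h : G) (u v : G → S) :
    weightedShift g u * weightedShift h v = weightedShift (h + g) fun c => u (c + h) * v c := by
  ext r c
  simp [weightedShift, Matrix.mul_apply, add_assoc]

theorem prod_map_weightedShift [Fintype G] [AddMonoid G] [CommSemiring S]
    (g : G) (w : ℕ → G → S) (n : ℕ) :
    ((List.range n).reverse.map fun k => weightedShift g (w k)).prod =
      weightedShift (n • g) fun c => ∏ k ∈ Finset.range n, w k (c + k • g) := by
  induction n with
  | zero => simp [weightedShift_zero]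
  | succ n ih =>
    rw [List.range_succ, List.reverse_append, List.reverse_singleton, List.singleton_append,
      List.map_cons, List.prod_cons, ih, weightedShift_mul_weightedShift, ← succ_nsmul]
    simp only [Finset.prod_range_succ, mul_comm]

end WeightedShift

section LaurentMonomials

variable {R S : Type*}

theorem prod_T [CommSemiring R] {ι : Type*} (s : Finset ι) (m : ι → ℤ) :
    ∏ i ∈ s, (T (m i) : R[T;T⁻¹]) = T (∑ i ∈ s, m i) := by
  simp only [T, AddMonoidAlgebra.prod_single, Finset.prod_const_one]

theorem map_T_of_map_T_one [Semiring R] [Semiring S] {F : Type*}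
    [FunLike F R[T;T⁻¹] S[T;T⁻¹]] [MonoidHomClass F R[T;T⁻¹] S[T;T⁻¹]] {f : F} {m : ℤ}
    (hf : f (T 1) = T m) (n : ℤ) : f (T n) = T (n * m) := by
  have map_T_natCast (k : ℕ) : f (T k) = T (k * m) := by
    rw [← mul_one (k : ℤ), ← T_pow, map_pow, hf, T_pow, mul_one]
  obtain ⟨k, rfl | rfl⟩ := n.eq_nat_or_neg
  · exact map_T_natCast k
  · refine left_inv_eq_right_inv (a := T (k * m)) ?_ ?_
    · rw [← map_T_natCast, ← map_mul, ← T_add, neg_add_cancel, T_zero, map_one]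
    · rw [← T_add, neg_mul, add_neg_cancel, T_zero]

end LaurentMonomials

theorem stmt3_general {R : Type*} [CommSemiring R] {a : ℕ} [NeZero a] (q : ℕ → ℤ) (e : Fin a → ℤ)
    (φ : ℕ → R[T;T⁻¹] →+* R[T;T⁻¹]) (hφ : ∀ k, φ k (T 1) = T (q k))
    (C₀ : Matrix (Fin a) (Fin a) R[T;T⁻¹])
    (hC₀ : ∀ r c, C₀ r c = if r = c + 1 then T (-e c) else 0) :
    ((List.range a).reverse.map fun k => C₀.map (φ k)).prod =
      Matrix.diagonal fun j => T (-∑ i : Fin a, e (i + j) * q i) := by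
  have C₀_eq : C₀ = weightedShift 1 fun c => T (-e c) := Matrix.ext hC₀
  have val_nsmul_one (i : Fin a) : (i : ℕ) • (1 : Fin a) = i := by
    open Fin.CommRing in rw [nsmul_one, Fin.cast_val_eq_self]
  have map_C₀ (k : ℕ) : C₀.map (φ k) = weightedShift 1 fun c => T (-(e c * q k)) := by
    rw [C₀_eq, weightedShift_map _ _ _ (map_zero _)]
    simp only [Function.comp_def, map_T_of_map_T_one (hφ k), neg_mul]
  have full_turn : a • (1 : Fin a) = 0 := by
    simpa only [Fintype.card_fin] using card_nsmul_eq_zero (x := (1 : Fin a))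
  simp only [map_C₀]
  rw [prod_map_weightedShift, full_turn, weightedShift_zero]
  congr 1 with j : 1
  rw [prod_T, Finset.sum_range, Finset.sum_neg_distrib]
  simp only [val_nsmul_one, add_comm j]

/-- Computational core of Proposition 5.5(1): the twisted product
`φ_{a−1}(C₀)·⋯·φ_1(C₀)·C₀` of the cyclic dual `p`-Frobenius structure matrix equals
`diag(t^{−ε_0}, …, t^{−ε_{a−1}})`, where `ε_j = ∑_i e_{(i+j) mod a} p^i`. -/
theorem stmt3
    (R : Type*) [CommRing R]
    (p a : ℕ) (hp : 0 < p) (ha : 0 < a) [NeZero a]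
    (e : Fin a → ℕ)
    (φ : ℕ → (LaurentPolynomial R →ₐ[R] LaurentPolynomial R))
    (hφ : ∀ k : ℕ, φ k (T 1) = T ((p : ℤ) ^ k))
    (C₀ : Matrix (Fin a) (Fin a) (LaurentPolynomial R))
    (hC₀ : ∀ r c : Fin a, C₀ r c = if r = c + 1 then T (-(e c : ℤ)) else 0) :
    (((List.range a).reverse.map (fun k => C₀.map ⇑(φ k))).prod)
      = Matrix.diagonal
          (fun j : Fin a => T (-(∑ i : Fin a, (e (i + j) : ℤ) * (p : ℤ) ^ (i : ℕ)))) :=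
  stmt3_general (fun k => (p : ℤ) ^ k) (fun c => (e c : ℤ)) (fun k => (φ k).toRingHom) hφ C₀ hC₀
end

section
/- Let L be a complete nonarchimedean nontrivially normed field whose closed unit ball O_L is a discrete valuation ring with maximal ideal 𝔪, and suppose the norm on L is multiplicative. Let R and S be Banach spaces over L whose norms are ultrametric, compatible with the norm of L, and take values in the set of norms of elements of L. Let R₀ = {x ∈ R : ‖x‖ ≤ 1} and S₀ = {y ∈ S : ‖y‖ ≤ 1}, regarded as O_L-submodules, and let R̄ = R₀/𝔪R₀, S̄ = S₀/𝔪S₀. Let f : R → S be a continuous L-linear map with f(R₀) ⊆ S₀, and let f̄ : R̄ → S̄ be the induced map. If f̄ is surjective, then f is surjective, f(R₀) = S₀, and the image of ker(f) ∩ R₀ in R̄ equals ker(f̄). -/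
/-!
Let `π` generate `𝔪`. Discreteness of the norms makes `‖y‖ < 1` equivalent to `‖y‖ ≤ ‖π‖`, so
surjectivity of `f̄` says that every `y ∈ S₀` is `f x₀ + π • y₁` with `x₀ ∈ R₀` and `y₁ ∈ S₀`.
Iterating, `y = ∑ πⁿ • f xₙ` with all `xₙ ∈ R₀`; as `R` is complete, `∑ πⁿ • xₙ` converges, and
since `R` is ultrametric its sum is a preimage of `y` in `R₀`. By scaling, `y` has a preimage of
norm at most `‖c‖` whenever `c ≠ 0` and `‖y‖ ≤ ‖c‖`. This gives surjectivity, and when `f x ∈ 𝔪S₀`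
it allows `x` to be moved into `ker f` by subtracting an element of `𝔪R₀`.
-/

open Filter Topology

section Norm

variable {L E : Type*} [NormedDivisionRing L] [SeminormedAddCommGroup E]

theorem norm_lt_one_iff_norm_le_of_discrete {π : L} (hπ₀ : 0 < ‖π‖) (hπ₁ : ‖π‖ < 1)
    (hdvr : ∀ c : L, c ≠ 0 → ∃ n : ℤ, ‖c‖ = ‖π‖ ^ n)
    (hE : ∀ x : E, x ≠ 0 → ∃ c : L, ‖x‖ = ‖c‖) (x : E) : ‖x‖ < 1 ↔ ‖x‖ ≤ ‖π‖ := by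
  refine ⟨fun hx ↦ ?_, fun hx ↦ hx.trans_lt hπ₁⟩
  rcases eq_or_ne x 0 with rfl | hx₀
  · simp
  obtain ⟨c, hc⟩ := hE x hx₀
  rw [hc] at hx ⊢
  rcases eq_or_ne c 0 with rfl | hc₀
  · simp
  obtain ⟨n, hn⟩ := hdvr c hc₀
  rw [hn] at hx ⊢
  have hn_pos : 0 < n := (zpow_lt_one_iff_right_of_lt_one₀ hπ₀ hπ₁).mp hx
  exact (zpow_le_zpow_right_of_le_one₀ hπ₀ hπ₁.le hn_pos).trans_eq (zpow_one _)

theorem norm_le_of_norm_sub_le [IsUltrametricDist E] {x y : E} {r : ℝ} (hx : ‖x‖ ≤ r)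
    (hxy : ‖x - y‖ ≤ r) : ‖y‖ ≤ r :=
  calc
    ‖y‖ = ‖x + (y - x)‖ := by rw [add_sub_cancel]
    _ ≤ max ‖x‖ ‖y - x‖ := IsUltrametricDist.norm_add_le_max x (y - x)
    _ ≤ r := max_le hx (by rwa [norm_sub_rev])

variable [Module L E] [NormSMulClass L E]

theorem norm_inv_smul_le_one_iff {c : L} (hc : c ≠ 0) {x : E} : ‖c⁻¹ • x‖ ≤ 1 ↔ ‖x‖ ≤ ‖c‖ := by
  rw [norm_smul, norm_inv, inv_mul_le_one₀ (norm_pos_iff.mpr hc)]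

theorem summable_norm_pow_smul {π : L} (hπ₁ : ‖π‖ < 1) {a : ℕ → E} {C : ℝ}
    (ha : ∀ n, ‖a n‖ ≤ C) : Summable fun n ↦ ‖π ^ n • a n‖ := by
  refine .of_nonneg_of_le (fun n ↦ norm_nonneg _) (fun n ↦ ?_)
    ((summable_geometric_of_lt_one (norm_nonneg π) hπ₁).mul_right C)
  rw [norm_smul, norm_pow]
  gcongr
  exact ha n

theorem exists_hasSum_pow_smul {π : L} (hπ₀ : π ≠ 0) (hπ₁ : ‖π‖ < 1) {A : Set E}
    (hA : ∀ y : E, ‖y‖ ≤ 1 → ∃ a ∈ A, ‖a - y‖ ≤ ‖π‖) {y : E} (hy : ‖y‖ ≤ 1) :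
    ∃ a : ℕ → E, (∀ n, a n ∈ A) ∧ HasSum (fun n ↦ π ^ n • a n) y := by
  choose! digit digit_mem norm_digit_sub using hA
  let u : ℕ → E := fun n ↦ (fun z ↦ π⁻¹ • (z - digit z))^[n] y
  have u_succ (n : ℕ) : u (n + 1) = π⁻¹ • (u n - digit (u n)) :=
    Function.iterate_succ_apply' _ n y
  have norm_u (n : ℕ) : ‖u n‖ ≤ 1 := by
    induction n with
    | zero => exact hy
    | succ n ih =>
      rw [u_succ, norm_inv_smul_le_one_iff hπ₀, norm_sub_rev]
      exact norm_digit_sub _ ih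
  have norm_digit (n : ℕ) : ‖digit (u n)‖ ≤ ‖π‖ + 1 :=
    (norm_le_norm_sub_add _ (u n)).trans (add_le_add (norm_digit_sub _ (norm_u n)) (norm_u n))
  have sum_eq (n : ℕ) : ∑ i ∈ Finset.range n, π ^ i • digit (u i) = y - π ^ n • u n := by
    induction n with
    | zero => simp [u]
    | succ n ih =>
      have h_step : π ^ (n + 1) • u (n + 1) = π ^ n • (u n - digit (u n)) := by
        rw [u_succ, pow_succ, mul_smul, smul_inv_smul₀ hπ₀]
      rw [Finset.sum_range_succ, ih, h_step, smul_sub]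
      abel
  have remainder_tendsto : Tendsto (fun n ↦ π ^ n • u n) atTop (𝓝 0) :=
    tendsto_zero_iff_norm_tendsto_zero.mpr
      (summable_norm_pow_smul hπ₁ norm_u).tendsto_atTop_zero
  refine ⟨fun n ↦ digit (u n), fun n ↦ digit_mem _ (norm_u n), ?_⟩
  rw [hasSum_iff_tendsto_nat_of_summable_norm (summable_norm_pow_smul hπ₁ norm_digit)]
  simpa only [sum_eq, sub_zero] using remainder_tendsto.const_sub y

end Norm

section Lift

variable {L R S : Type*} [NormedDivisionRing L] [SeminormedAddCommGroup R] [Module L R]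
  [NormSMulClass L R] [NormedAddCommGroup S] [Module L S] [NormSMulClass L S]

theorem exists_norm_le_one_map_eq_of_approx [CompleteSpace R] [IsUltrametricDist R] {π : L}
    (hπ₀ : π ≠ 0) (hπ₁ : ‖π‖ < 1) (f : R →L[L] S)
    (happrox : ∀ y : S, ‖y‖ ≤ 1 → ∃ x : R, ‖x‖ ≤ 1 ∧ ‖f x - y‖ ≤ ‖π‖) {y : S} (hy : ‖y‖ ≤ 1) :
    ∃ x : R, ‖x‖ ≤ 1 ∧ f x = y := by
  obtain ⟨a, ha, ha_sum⟩ := exists_hasSum_pow_smul (A := f '' {x | ‖x‖ ≤ 1}) hπ₀ hπ₁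
    (fun z hz ↦ by simpa [and_assoc] using happrox z hz) hy
  choose x norm_x f_x using ha
  have h_summable : Summable fun n ↦ π ^ n • x n :=
    (summable_norm_pow_smul hπ₁ norm_x).of_norm
  refine ⟨∑' n, π ^ n • x n, ?_, ?_⟩
  · refine IsUltrametricDist.norm_tsum_le_of_forall_le_of_nonneg zero_le_one fun n ↦ ?_
    rw [norm_smul, norm_pow]
    exact mul_le_one₀ (pow_le_one₀ (norm_nonneg π) hπ₁.le) (norm_nonneg _) (norm_x n)
  · have h_map : HasSum (fun n ↦ π ^ n • a n) (f (∑' n, π ^ n • x n)) := by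
      simpa only [Function.comp_def, map_smul, f_x] using h_summable.hasSum.mapL f
    exact h_map.unique ha_sum

end Lift

section Scaling

variable {L R S : Type*} [NormedDivisionRing L]
  [SeminormedAddCommGroup R] [Module L R] [NormSMulClass L R]
  [SeminormedAddCommGroup S] [Module L S] [NormSMulClass L S] {f : R →ₗ[L] S}

theorem norm_map_le_of_norm_le (hf : ∀ x : R, ‖x‖ ≤ 1 → ‖f x‖ ≤ 1) {c : L} (hc : c ≠ 0) {x : R}
    (hx : ‖x‖ ≤ ‖c‖) : ‖f x‖ ≤ ‖c‖ := by
  rw [← norm_inv_smul_le_one_iff hc] at hx ⊢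
  simpa only [map_smul] using hf _ hx

theorem exists_norm_le_map_eq (hf : ∀ y : S, ‖y‖ ≤ 1 → ∃ x : R, ‖x‖ ≤ 1 ∧ f x = y) {c : L}
    (hc : c ≠ 0) {y : S} (hy : ‖y‖ ≤ ‖c‖) : ∃ x : R, ‖x‖ ≤ ‖c‖ ∧ f x = y := by
  obtain ⟨x, hx, hfx⟩ := hf (c⁻¹ • y) ((norm_inv_smul_le_one_iff hc).mpr hy)
  refine ⟨c • x, ?_, by rw [map_smul, hfx, smul_inv_smul₀ hc]⟩
  rw [norm_smul]
  exact mul_le_of_le_one_right (norm_nonneg c) hx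

theorem surjective_of_forall_exists_norm_le_one {π : L} (hπ₀ : π ≠ 0) (hπ₁ : ‖π‖ < 1)
    (hf : ∀ y : S, ‖y‖ ≤ 1 → ∃ x : R, ‖x‖ ≤ 1 ∧ f x = y) : Function.Surjective f := by
  intro y
  obtain ⟨n, hn⟩ : ∃ n : ℕ, ‖y‖ < ‖π⁻¹‖ ^ n := pow_unbounded_of_one_lt _ <| by
    simpa only [norm_inv] using (one_lt_inv₀ (norm_pos_iff.mpr hπ₀)).mpr hπ₁
  obtain ⟨x, -, hx⟩ := exists_norm_le_map_eq hf (pow_ne_zero n (inv_ne_zero hπ₀))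
    (by simpa only [norm_pow] using hn.le)
  exact ⟨x, hx⟩

theorem norm_map_le_iff_exists_map_eq_zero (hf_int : ∀ x : R, ‖x‖ ≤ 1 → ‖f x‖ ≤ 1)
    (hf : ∀ y : S, ‖y‖ ≤ 1 → ∃ x : R, ‖x‖ ≤ 1 ∧ f x = y) {c : L} (hc : c ≠ 0) (x : R) :
    ‖f x‖ ≤ ‖c‖ ↔ ∃ x' : R, f x' = 0 ∧ ‖x - x'‖ ≤ ‖c‖ := by
  constructor
  · intro hfx
    obtain ⟨z, hz, hfz⟩ := exists_norm_le_map_eq hf hc hfx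
    exact ⟨x - z, by rw [map_sub, hfz, sub_self], by rwa [sub_sub_cancel]⟩
  · rintro ⟨x', hx', hxx'⟩
    simpa only [map_sub, hx', sub_zero] using norm_map_le_of_norm_le hf_int hc hxx'

end Scaling

theorem stmt4_general {L R S : Type*} [NormedDivisionRing L]
    [SeminormedAddCommGroup R] [Module L R] [NormSMulClass L R] [CompleteSpace R]
    [IsUltrametricDist R] [NormedAddCommGroup S] [Module L S] [NormSMulClass L S]
    (hdvr : ∃ π : L, 0 < ‖π‖ ∧ ‖π‖ < 1 ∧ ∀ x : L, x ≠ 0 → ∃ n : ℤ, ‖x‖ = ‖π‖ ^ n)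
    (hR_val : ∀ x : R, x ≠ 0 → ∃ c : L, ‖x‖ = ‖c‖)
    (hS_val : ∀ y : S, y ≠ 0 → ∃ c : L, ‖y‖ = ‖c‖)
    (f : R →L[L] S)
    (hf_int : ∀ x : R, ‖x‖ ≤ 1 → ‖f x‖ ≤ 1)
    (hsurj : ∀ y : S, ‖y‖ ≤ 1 → ∃ x : R, ‖x‖ ≤ 1 ∧ ‖f x - y‖ < 1) :
    Function.Surjective f ∧
      (∀ y : S, ‖y‖ ≤ 1 → ∃ x : R, ‖x‖ ≤ 1 ∧ f x = y) ∧
      (∀ x : R, ‖x‖ ≤ 1 →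
        (‖f x‖ < 1 ↔ ∃ x' : R, f x' = 0 ∧ ‖x'‖ ≤ 1 ∧ ‖x - x'‖ < 1)) := by
  obtain ⟨π, hπ_pos, hπ₁, hdvr⟩ := hdvr
  have hπ₀ : π ≠ 0 := norm_pos_iff.mp hπ_pos
  have hR_lt (x : R) : ‖x‖ < 1 ↔ ‖x‖ ≤ ‖π‖ :=
    norm_lt_one_iff_norm_le_of_discrete hπ_pos hπ₁ hdvr hR_val x
  have hS_lt (y : S) : ‖y‖ < 1 ↔ ‖y‖ ≤ ‖π‖ :=
    norm_lt_one_iff_norm_le_of_discrete hπ_pos hπ₁ hdvr hS_val y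
  simp only [hS_lt] at hsurj
  have hball (y : S) (hy : ‖y‖ ≤ 1) : ∃ x : R, ‖x‖ ≤ 1 ∧ f x = y :=
    exists_norm_le_one_map_eq_of_approx hπ₀ hπ₁ f hsurj hy
  refine ⟨surjective_of_forall_exists_norm_le_one (f := f.toLinearMap) hπ₀ hπ₁ hball, hball,
    fun x hx ↦ ?_⟩
  have hker : ‖f x‖ ≤ ‖π‖ ↔ ∃ x' : R, f x' = 0 ∧ ‖x - x'‖ ≤ ‖π‖ :=
    norm_map_le_iff_exists_map_eq_zero (f := f.toLinearMap) hf_int hball hπ₀ x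
  rw [hS_lt, hker]
  simp only [hR_lt]
  exact exists_congr fun x' ↦ and_congr_right fun _ ↦
    ⟨fun hxx' ↦ ⟨norm_le_of_norm_sub_le hx (hxx'.trans hπ₁.le), hxx'⟩, And.right⟩

/-- Lemma 7.3 of the paper: for a continuous linear map `f : R → S` of nonarchimedean
Banach spaces over a complete discretely valued nonarchimedean field `L`, with
`f(R₀) ⊆ S₀`, if the induced map `f̄ : R₀/𝔪R₀ → S₀/𝔪S₀` is surjective then `f` is
surjective, `f(R₀) = S₀`, and the image of `ker f ∩ R₀` in `R̄` is `ker f̄`.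
(Here the unit balls `R₀, S₀` and the reductions are expressed elementwise: `𝔪R₀` is
the set of elements of norm `< 1`, using that norms of vectors lie in the norm group
of `L` and that the valuation of `L` is discrete.) -/
theorem stmt4
    (L : Type*) [NontriviallyNormedField L] [CompleteSpace L]
    (hL_na : IsNonarchimedean (fun x : L => ‖x‖))
    (hdvr : ∃ π : L, 0 < ‖π‖ ∧ ‖π‖ < 1 ∧ ∀ x : L, x ≠ 0 → ∃ n : ℤ, ‖x‖ = ‖π‖ ^ n)
    (R S : Type*)
    [NormedAddCommGroup R] [NormedSpace L R] [CompleteSpace R]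
    [NormedAddCommGroup S] [NormedSpace L S] [CompleteSpace S]
    (hR_na : IsNonarchimedean (fun x : R => ‖x‖))
    (hS_na : IsNonarchimedean (fun y : S => ‖y‖))
    (hR_comp : ∀ (c : L) (x : R), ‖c • x‖ = ‖c‖ * ‖x‖)
    (hS_comp : ∀ (c : L) (y : S), ‖c • y‖ = ‖c‖ * ‖y‖)
    (hR_val : ∀ x : R, x ≠ 0 → ∃ c : L, ‖x‖ = ‖c‖)
    (hS_val : ∀ y : S, y ≠ 0 → ∃ c : L, ‖y‖ = ‖c‖)
    (f : R →L[L] S)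
    (hf_int : ∀ x : R, ‖x‖ ≤ 1 → ‖f x‖ ≤ 1)
    (hsurj : ∀ y : S, ‖y‖ ≤ 1 → ∃ x : R, ‖x‖ ≤ 1 ∧ ‖f x - y‖ < 1) :
    Function.Surjective f ∧
      (∀ y : S, ‖y‖ ≤ 1 → ∃ x : R, ‖x‖ ≤ 1 ∧ f x = y) ∧
      (∀ x : R, ‖x‖ ≤ 1 →
        (‖f x‖ < 1 ↔ ∃ x' : R, f x' = 0 ∧ ‖x'‖ ≤ 1 ∧ ‖x - x'‖ < 1)) := by
  have := IsUltrametricDist.isUltrametricDist_of_isNonarchimedean_norm hR_na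
  exact stmt4_general hdvr hR_val hS_val f hf_int hsurj
end

section
/- Let K be a field with a complete nonarchimedean (ultrametric, multiplicative) norm ‖·‖, let I be a countable type, and let n : I × I → K be a doubly indexed family ('matrix', with n(r,c) the entry in row r and column c). For each i ∈ I, suppose the column supremum C_i = sup_{j ∈ I} ‖n(j,i)‖ is finite, and suppose that for every ε > 0 the set {i ∈ I : C_i > ε} is finite. Then for every integer d ≥ 0: (1) the family indexed by pairs (S, σ), where S ranges over d-element finite subsets of I and σ over permutations of S, with value sgn(σ)·∏_{i∈S} n(i, σ(i)), is summable in K; and (2) its sum c_d satisfies ‖c_d‖ ≤ sup over d-element finite subsets S of I of ∏_{i∈S} C_i. -/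
open scoped BigOperators

/-!
If `C i → 0`, then only finitely many `C i` exceed `1`, so the products `∏ i ∈ S, C i` over all
finite sets `S` have a common bound `B`. Hence `ε ≤ ∏ i ∈ S, C i` forces `ε / B ≤ C i` for every
`i ∈ S`, which leaves only finitely many `S`: the products tend to `0`. When `C` dominates the
columns, `∏ i ∈ S, C i` dominates every Leibniz term of the principal minor on `S`, because a
permutation of `S` uses each column exactly once. Over an ultrametric norm, convergence of the terms
to `0` gives summability, and a sum is no larger than the supremum of its terms.
-/

open Filter Topology

section Cofinite

variable {ι α : Type*}

theorem tendsto_sigma_fst_cofinite {β : ι → Type*} [∀ i, Finite (β i)] :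
    Tendsto (Sigma.fst : (Σ i, β i) → ι) cofinite cofinite :=
  .cofinite_of_finite_preimage_singleton fun i => by
    rw [← Set.range_sigmaMk]
    exact Set.finite_range _

theorem tendsto_cofinite_of_forall_finite_lt [LinearOrder α] [DenselyOrdered α]
    [TopologicalSpace α] [OrderTopology α] {f : ι → α} {a : α} (hf : ∀ i, a ≤ f i)
    (hfin : ∀ ε, a < ε → {i | ε < f i}.Finite) : Tendsto f cofinite (𝓝 a) := by
  refine tendsto_order.2 ⟨fun b hb => .of_forall fun i => hb.trans_le (hf i), fun b hb => ?_⟩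
  obtain ⟨c, hac, hcb⟩ := exists_between hb
  filter_upwards [(hfin c hac).eventually_cofinite_notMem] with i hi
  exact (not_lt.1 hi).trans_lt hcb

end Cofinite

section FinsetProd

variable {ι R : Type*}

theorem prod_le_prod_of_one_le_of_le_one [CommSemiring R] [PartialOrder R] [IsOrderedRing R]
    {f : ι → R} {T : Finset ι} (hf : ∀ i, 0 ≤ f i) (hT : ∀ i ∈ T, 1 ≤ f i)
    (hTc : ∀ i ∉ T, f i ≤ 1) (S : Finset ι) : ∏ i ∈ S, f i ≤ ∏ i ∈ T, f i := by
  classical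
  calc ∏ i ∈ S, f i
      ≤ ∏ i ∈ S ∩ T, f i :=
        Finset.prod_le_prod_of_subset_of_le_one Finset.inter_subset_left (fun i _ => hf i)
          fun i hiS hi => hTc i fun hiT => hi (Finset.mem_inter.2 ⟨hiS, hiT⟩)
    _ ≤ ∏ i ∈ T, f i :=
        Finset.prod_le_prod_of_subset_of_one_le Finset.inter_subset_right (fun i _ => hf i)
          fun i hiT _ => hT i hiT

theorem exists_forall_prod_le_of_tendsto_cofinite_zero [CommSemiring R] [LinearOrder R]
    [IsStrictOrderedRing R] [TopologicalSpace R] [ClosedIciTopology R] {f : ι → R}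
    (hf : ∀ i, 0 ≤ f i) (hlim : Tendsto f cofinite (𝓝 0)) :
    ∃ B, ∀ S : Finset ι, ∏ i ∈ S, f i ≤ B := by
  have hfin : {i | ¬f i < 1}.Finite := eventually_cofinite.1 (hlim.eventually_lt_const one_pos)
  refine ⟨∏ i ∈ hfin.toFinset, f i, prod_le_prod_of_one_le_of_le_one hf (fun i hi => ?_)
    fun i hi => ?_⟩
  · exact not_lt.1 (hfin.mem_toFinset.1 hi)
  · exact (not_not.1 (mt hfin.mem_toFinset.2 hi)).le

theorem tendsto_finset_prod_cofinite_zero [Field R] [LinearOrder R] [IsStrictOrderedRing R]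
    [TopologicalSpace R] [OrderTopology R] {f : ι → R} (hf : ∀ i, 0 ≤ f i)
    (hlim : Tendsto f cofinite (𝓝 0)) :
    Tendsto (fun S : Finset ι => ∏ i ∈ S, f i) cofinite (𝓝 0) := by
  classical
  obtain ⟨B, hB⟩ := exists_forall_prod_le_of_tendsto_cofinite_zero hf hlim
  have hBpos : 0 < B := one_pos.trans_le (by simpa only [Finset.prod_empty] using hB ∅)
  refine tendsto_cofinite_of_forall_finite_lt (fun S => Finset.prod_nonneg fun i _ => hf i)
    fun ε hε => ?_
  have hfin : {i | ¬f i < ε / B}.Finite :=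
    eventually_cofinite.1 (hlim.eventually_lt_const (div_pos hε hBpos))
  refine hfin.toFinset.powerset.finite_toSet.subset fun S hS => ?_
  refine Finset.mem_coe.2 (Finset.mem_powerset.2 fun i hi => hfin.mem_toFinset.2 (not_lt.2 ?_))
  rw [div_le_iff₀ hBpos]
  calc ε ≤ ∏ j ∈ S, f j := le_of_lt hS
    _ = f i * ∏ j ∈ S.erase i, f j := (Finset.mul_prod_erase S f hi).symm
    _ ≤ f i * B := mul_le_mul_of_nonneg_left (hB _) (hf i)

end FinsetProd

section Fredholm

variable {R I : Type*}

/-- The index set of the Leibniz expansion of the `d`-th Fredholm coefficient: a `d`-element set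
`S` of indices together with a permutation of `S`. -/
abbrev FredholmIndex (I : Type*) (d : ℕ) : Type _ :=
  Σ S : {S : Finset I // S.card = d}, Equiv.Perm {x // x ∈ S.1}

/-- The Leibniz term of the principal minor of the matrix `n` on `S` attached to a permutation
of `S`; in `n (r, c)`, `r` is the row and `c` the column. -/
def fredholmTerm [CommRing R] [DecidableEq I] (n : I × I → R) {d : ℕ}
    (p : FredholmIndex I d) : R :=
  ((Equiv.Perm.sign p.2 : ℤ) : R) * ∏ i : {x // x ∈ p.1.1}, n (i.1, (p.2 i).1)

/-- The sum of the principal `d × d` minors of `n`, which is the coefficient of `s ^ d` in the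
Fredholm determinant `det (1 - s n)` up to the sign `(-1) ^ d`. It is `0` by convention if the
Leibniz terms are not summable. -/
noncomputable def fredholmCoeff [CommRing R] [TopologicalSpace R] [DecidableEq I] (n : I × I → R)
    (d : ℕ) : R :=
  ∑' p : FredholmIndex I d, fredholmTerm n p

variable [NormedCommRing R] [NormOneClass R] [DecidableEq I] {n : I × I → R} {C : I → ℝ}

theorem norm_fredholmTerm_le (hC : ∀ r c, ‖n (r, c)‖ ≤ C c) {d : ℕ} (p : FredholmIndex I d) :
    ‖fredholmTerm n p‖ ≤ ∏ i ∈ p.1.1, C i := by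
  obtain ⟨S, σ⟩ := p
  calc ‖fredholmTerm n ⟨S, σ⟩‖
      = ‖∏ i : {x // x ∈ S.1}, n (i.1, (σ i).1)‖ := by
        rw [fredholmTerm, ← zsmul_eq_mul, ← Units.smul_def, norm_units_zsmul]
    _ ≤ ∏ i : {x // x ∈ S.1}, ‖n (i.1, (σ i).1)‖ := Finset.norm_prod_le _ _
    _ ≤ ∏ i : {x // x ∈ S.1}, C (σ i).1 :=
        Finset.prod_le_prod (fun _ _ => norm_nonneg _) fun _ _ => hC _ _
    _ = ∏ i : {x // x ∈ S.1}, C i.1 := Equiv.prod_comp σ fun i => C i.1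
    _ = ∏ i ∈ S.1, C i := Finset.prod_coe_sort S.1 C

theorem tendsto_fredholmTerm_cofinite_zero (hC : ∀ r c, ‖n (r, c)‖ ≤ C c)
    (hlim : Tendsto C cofinite (𝓝 0)) (d : ℕ) :
    Tendsto (fun p : FredholmIndex I d => fredholmTerm n p) cofinite (𝓝 0) := by
  have hC0 : ∀ i, 0 ≤ C i := fun i => (norm_nonneg _).trans (hC i i)
  refine squeeze_zero_norm (norm_fredholmTerm_le hC) ?_
  exact (tendsto_finset_prod_cofinite_zero hC0 hlim).comp
    (Subtype.val_injective.tendsto_cofinite.comp tendsto_sigma_fst_cofinite)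

variable [IsUltrametricDist R]

theorem summable_fredholmTerm [CompleteSpace R] (hC : ∀ r c, ‖n (r, c)‖ ≤ C c)
    (hlim : Tendsto C cofinite (𝓝 0)) (d : ℕ) :
    Summable fun p : FredholmIndex I d => fredholmTerm n p :=
  NonarchimedeanAddGroup.summable_of_tendsto_cofinite_zero
    (tendsto_fredholmTerm_cofinite_zero hC hlim d)

theorem norm_fredholmCoeff_le (hC : ∀ r c, ‖n (r, c)‖ ≤ C c)
    (hlim : Tendsto C cofinite (𝓝 0)) (d : ℕ) :
    ‖fredholmCoeff n d‖ ≤ ⨆ S : {S : Finset I // S.card = d}, ∏ i ∈ S.1, C i := by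
  have hC0 : ∀ i, 0 ≤ C i := fun i => (norm_nonneg _).trans (hC i i)
  have hbdd : BddAbove (Set.range fun S : {S : Finset I // S.card = d} => ∏ i ∈ S.1, C i) := by
    obtain ⟨B, hB⟩ := exists_forall_prod_le_of_tendsto_cofinite_zero hC0 hlim
    exact ⟨B, Set.forall_mem_range.2 fun S => hB S.1⟩
  refine IsUltrametricDist.norm_tsum_le_of_forall_le_of_nonneg
    (Real.iSup_nonneg fun S => Finset.prod_nonneg fun i _ => hC0 i) fun p => ?_
  exact (norm_fredholmTerm_le hC p).trans (le_ciSup hbdd p.1)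

end Fredholm

theorem stmt5_general {R : Type*} [NormedCommRing R] [NormOneClass R] [IsUltrametricDist R]
    [CompleteSpace R] {I : Type*} [DecidableEq I] {n : I × I → R} {C : I → ℝ}
    (hC : ∀ r c, ‖n (r, c)‖ ≤ C c) (hlim : Tendsto C cofinite (𝓝 0)) (d : ℕ) :
    Summable (fun p : FredholmIndex I d => fredholmTerm n p) ∧
      ‖fredholmCoeff n d‖ ≤ ⨆ S : {S : Finset I // S.card = d}, ∏ i ∈ S.1, C i :=
  ⟨summable_fredholmTerm hC hlim d, norm_fredholmCoeff_le hC hlim d⟩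

/-- Lemma 6.7 of the paper in coefficient form: the coefficients of the Fredholm
determinant of a matrix `n` over a complete nonarchimedean field whose column suprema
`C_i` tend to `0` are given by summable families, and `‖c_d‖` is bounded by the
supremum over `d`-element subsets `S` of `∏_{i ∈ S} C_i`. -/
theorem stmt5
    (K : Type*) [NormedField K] [CompleteSpace K]
    (hK : IsNonarchimedean (fun x : K => ‖x‖))
    (I : Type*) [Countable I] [DecidableEq I]
    (n : I × I → K)
    (hbdd : ∀ i : I, BddAbove (Set.range fun j : I => ‖n (j, i)‖))
    (hfin : ∀ ε : ℝ, 0 < ε → {i : I | ε < ⨆ j : I, ‖n (j, i)‖}.Finite)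
    (d : ℕ) :
    Summable (fun Sσ : Σ S : {S : Finset I // S.card = d}, Equiv.Perm {x // x ∈ S.1} =>
        ((Equiv.Perm.sign Sσ.2 : ℤ) : K) * ∏ i : {x // x ∈ Sσ.1.1}, n (i.1, (Sσ.2 i).1)) ∧
      ‖∑' Sσ : Σ S : {S : Finset I // S.card = d}, Equiv.Perm {x // x ∈ S.1},
          ((Equiv.Perm.sign Sσ.2 : ℤ) : K) * ∏ i : {x // x ∈ Sσ.1.1}, n (i.1, (Sσ.2 i).1)‖
        ≤ ⨆ S : {S : Finset I // S.card = d}, ∏ i ∈ S.1, ⨆ j : I, ‖n (j, i)‖ := by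
  have := IsUltrametricDist.isUltrametricDist_of_isNonarchimedean_norm hK
  exact stmt5_general (fun j i => le_ciSup (hbdd i) j)
    (tendsto_cofinite_of_forall_finite_lt (fun i => Real.iSup_nonneg fun j => norm_nonneg _) hfin) d
end
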